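/- Let d ≥ 1, q ≥ 2 an integer, J_d(u) = ∫_{‖x‖≤1} e^{−i⟨u,x⟩} dx for u ∈ ℝ^d, and let s_q : ℝ^d → [0,∞) be the q-fold convolution of the function u ↦ J_d(u)² with itself. Then for every ε > 0 there exists a measurable φ : ℝ^d → ℂ with 0 < ∫_{ℝ^d} |φ(u)|² s_q(u) du < ∞ such that ∫_{ℝ^d} ĥ(u)·φ(u)·s_q(u) du = 0 for every bounded measurable compactly supported h : ℝ^d → ℂ with support contained in ℝ^d ∖ B(0,ε). Consequently the measure S_q = s_q·Leb does not induce linear maximal rigidity on the ball B(0,ε). -/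

import Mathlib

open MeasureTheory Complex
open scoped RealInnerProductSpace ENNReal NNReal Convolution

noncomputable section

abbrev Ed (d : ℕ) := EuclideanSpace ℝ (Fin d)

/-- Fourier transform `f̂(u) = ∫ e^{-i⟨u,x⟩} f(x) dx`. -/
def FT {d : ℕ} (f : Ed d → ℂ) (u : Ed d) : ℂ :=
  ∫ x : Ed d, Complex.exp (-Complex.I * (⟪u, x⟫ : ℝ)) * f x

/-- `f` is bounded, measurable, with bounded support contained in `A`. -/
def IsCBS {d : ℕ} (A : Set (Ed d)) (f : Ed d → ℂ) : Prop :=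
  Measurable f ∧ (∃ C : ℝ, ∀ x, ‖f x‖ ≤ C) ∧
    Bornology.IsBounded (Function.support f) ∧ Function.support f ⊆ A

/-- `S` induces linear maximal rigidity on `A`. -/
def LMR {d : ℕ} (S : Measure (Ed d)) (A : Set (Ed d)) : Prop :=
  ∀ f : Ed d → ℂ, IsCBS A f → ∀ ε : ℝ, 0 < ε →
    ∃ h : Ed d → ℂ, IsCBS Aᶜ h ∧ (∫ u, ‖FT f u - FT h u‖ ^ 2 ∂S) < ε
/-- `J_d(u) = ∫_{‖x‖≤1} e^{-i⟨u,x⟩} dx`, the Fourier transform of the indicator of the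
closed unit ball; the integral is real-valued, so we record its real part. -/
def Jd (d : ℕ) (u : Ed d) : ℝ :=
  (∫ x in Metric.closedBall (0 : Ed d) 1, Complex.exp (-Complex.I * (⟪u, x⟫ : ℝ))).re

/-- `convIter d g k` is the `(k+1)`-fold convolution `g ∗ ⋯ ∗ g`. -/
def convIter (d : ℕ) (g : Ed d → ℝ) : ℕ → Ed d → ℝ
  | 0 => g
  | (k + 1) => (convIter d g k) ⋆[ContinuousLinearMap.lsmul ℝ ℝ] g

/-- The spectral density `s_q = (J_d²)^{∗q}` of the field with covariance `Δ^q`. -/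
def specDensityQ (d q : ℕ) : Ed d → ℝ := convIter d (fun u => Jd d u ^ 2) (q - 1)

open FourierTransform in
lemma FT_eq_fourier {d : ℕ} (f : Ed d → ℂ) (u : Ed d) : FT f u = 𝓕 f ((2 * Real.pi)⁻¹ • u) := by
  rw [Real.fourier_eq', FT]
  congr 1; ext x
  rw [smul_eq_mul, inner_smul_right, real_inner_comm]
  congr 2
  push_cast
  have : (Real.pi : ℂ) ≠ 0 := by exact_mod_cast Real.pi_ne_zero
  field_simp

def Lform (d : ℕ) : Ed d →ₗ[ℝ] Ed d →ₗ[ℝ] ℝ := (2 * Real.pi)⁻¹ • innerₗ (Ed d)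

lemma Lform_cont (d : ℕ) : Continuous fun p : Ed d × Ed d => Lform d p.1 p.2 := by
  simp only [Lform, LinearMap.smul_apply, innerₗ_apply_apply]; fun_prop

lemma Lform_flip (d : ℕ) : (Lform d).flip = Lform d := by
  ext x y; simp [Lform, real_inner_comm]

lemma FT_eq_vec {d : ℕ} (f : Ed d → ℂ) :
    FT f = VectorFourier.fourierIntegral Real.fourierChar volume (Lform d) f := by
  ext u
  rw [FT_eq_fourier]
  rw [Real.fourier_eq, VectorFourier.fourierIntegral]
  simp [Lform, inner_smul_right]

lemma FT_cont {d : ℕ} {f : Ed d → ℂ} (hf : Integrable f) : Continuous (FT f) := by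
  rw [FT_eq_vec]
  exact VectorFourier.fourierIntegral_continuous Real.continuous_fourierChar (Lform_cont d) hf

lemma FT_bdd {d : ℕ} (f : Ed d → ℂ) (u : Ed d) : ‖FT f u‖ ≤ ∫ x, ‖f x‖ := by
  rw [FT_eq_vec]
  exact VectorFourier.norm_fourierIntegral_le_integral_norm _ _ _ _ _

lemma FT_swap {d : ℕ} {f g : Ed d → ℂ} (hf : Integrable f) (hg : Integrable g) :
    ∫ u, FT f u * g u = ∫ x, f x * FT g x := by
  have := VectorFourier.integral_fourierIntegral_smul_eq_flip (L := Lform d) (e := Real.fourierChar)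
    Real.continuous_fourierChar (Lform_cont d) hf hg
  rw [Lform_flip] at this
  simpa [FT_eq_vec] using this

lemma FT_conv {d : ℕ} {f g : Ed d → ℂ} (hf : Integrable f) (hg : Integrable g) (u : Ed d) :
    FT (f ⋆[ContinuousLinearMap.mul ℂ ℂ] g) u = FT f u * FT g u := by
  simp only [FT_eq_fourier, Real.fourier_mul_convolution_eq hf hg]

/-- indicator of the ball -/
def indB (d : ℕ) : Ed d → ℂ := (Metric.closedBall (0 : Ed d) 1).indicator (fun _ => (1:ℂ))

lemma indB_memLp (d : ℕ) (p : ℝ≥0∞) : MemLp (indB d) p := by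
  refine memLp_indicator_const p Metric.isClosed_closedBall.measurableSet _ (Or.inr ?_)
  exact (isCompact_closedBall _ _).measure_lt_top.ne

lemma indB_int (d : ℕ) : Integrable (indB d) := memLp_one_iff_integrable.1 (indB_memLp d 1)

lemma indB_neg (d : ℕ) (x : Ed d) : indB d (-x) = indB d x := by
  simp [indB, Set.indicator]

lemma Jd_eq (d : ℕ) (u : Ed d) : (Jd d u : ℂ) = FT (indB d) u := by
  have h1 : (∫ x in Metric.closedBall (0 : Ed d) 1, Complex.exp (-Complex.I * (⟪u, x⟫ : ℝ)))
      = FT (indB d) u := by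
    rw [FT, ← integral_indicator Metric.isClosed_closedBall.measurableSet]
    congr 1; ext x
    by_cases hx : x ∈ Metric.closedBall (0 : Ed d) 1 <;> simp [indB, hx]
  rw [Jd, h1]
  rw [← Complex.conj_eq_iff_re]
  rw [FT, ← integral_conj, ← integral_neg_eq_self]
  congr 1; ext x
  rw [indB_neg, map_mul, ← Complex.exp_conj]
  congr 2
  · simp
  · by_cases hx : x ∈ Metric.closedBall (0 : Ed d) 1 <;> simp [indB, hx]

lemma Jd_cont (d : ℕ) : Continuous (Jd d) := by
  have : Jd d = fun u => (FT (indB d) u).re := by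
    ext u; rw [← Jd_eq, Complex.ofReal_re]
  rw [this]
  exact Complex.continuous_re.comp (FT_cont (indB_int d))

open FourierTransform SchwartzMap in
lemma fourier_memL2 (d : ℕ) {f : Ed d → ℂ} (h1 : Integrable f) (h2 : MemLp f 2) : MemLp (𝓕 f) 2 := by
  have hc : Continuous (𝓕 f) := by
    have : 𝓕 f = fun u => FT f ((2 * Real.pi) • u) := by
      ext u; rw [FT_eq_fourier, smul_smul, inv_mul_cancel₀ (by positivity), one_smul]
    rw [this]; exact (FT_cont h1).comp (by fun_prop)
  set F : Lp (α := Ed d) ℂ 2 volume := h2.toLp f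
  set G : Lp (α := Ed d) ℂ 2 volume := 𝓕 F
  have key : ∀ ψ : 𝓢(Ed d, ℂ), ∫ x, ψ x * G x = ∫ x, ψ x * 𝓕 f x := by
    intro ψ
    have e := congrArg (fun T => T ψ) (Lp.fourier_toTemperedDistribution_eq F)
    simp only [TemperedDistribution.fourier_apply, Lp.toTemperedDistribution_apply, smul_eq_mul] at e
    rw [← e]
    have h3 : ∫ x, (𝓕 ψ) x * F x = ∫ x, (𝓕 (ψ : Ed d → ℂ)) x * f x := by
      refine integral_congr_ae ?_
      filter_upwards [h2.coeFn_toLp] with x hx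
      rw [hx, SchwartzMap.fourier_coe]
    rw [h3]
    have := VectorFourier.integral_fourierIntegral_smul_eq_flip (L := innerₗ (Ed d)) (e := Real.fourierChar)
      Real.continuous_fourierChar continuous_inner (ψ.integrable (μ := volume)) h1
    rw [flip_innerₗ] at this
    exact this
  have hae : G =ᵐ[volume] 𝓕 f := by
    refine ae_eq_of_integral_contDiff_smul_eq ((Lp.memLp G).locallyIntegrable (by norm_num))
      hc.locallyIntegrable ?_
    intro g hg hgs
    have hs : HasCompactSupport (fun x => (g x : ℂ)) := hgs.comp_left (g := Complex.ofReal) (by simp)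
    have := key (hs.toSchwartzMap (Complex.ofRealCLM.contDiff.comp hg))
    simp only [Complex.real_smul]
    exact this
  exact (memLp_congr_ae hae).1 (Lp.memLp G)

lemma Jd_sq_int (d : ℕ) : Integrable (fun u => Jd d u ^ 2) := by
  have h := fourier_memL2 d (indB_int d) (indB_memLp d 2)
  have h2 : Integrable (fun u => ‖FourierTransform.fourier (indB d) u‖ ^ 2) := h.integrable_norm_pow (by norm_num)
  have h3 := h2.comp_smul (R := (2 * Real.pi)⁻¹) (by positivity)
  refine h3.congr (Filter.Eventually.of_forall fun u => ?_)
  simp only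
  rw [← FT_eq_fourier, ← Jd_eq]; simp

lemma Jd_bdd (d : ℕ) : ∃ C, ∀ u, |Jd d u| ≤ C := by
  refine ⟨∫ x, ‖indB d x‖, fun u => ?_⟩
  have := FT_bdd (indB d) u
  rwa [← Jd_eq, Complex.norm_real] at this

def Good {d : ℕ} {𝕜 : Type*} [RCLike 𝕜] (f : Ed d → 𝕜) : Prop :=
  Continuous f ∧ Integrable f ∧ ∃ C : ℝ, ∀ x, ‖f x‖ ≤ C

lemma Good.conv {d : ℕ} {𝕜 : Type*} [RCLike 𝕜] {f g : Ed d → 𝕜} (hf : Good f) (hg : Good g)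
    (L : 𝕜 →L[𝕜] 𝕜 →L[𝕜] 𝕜) : Good (f ⋆[L] g) := by
  obtain ⟨fc, fi, Cf, hCf⟩ := hf
  obtain ⟨gc, gi, Cg, hCg⟩ := hg
  refine ⟨BddAbove.continuous_convolution_right_of_integrable L ⟨Cg, ?_⟩ fi gc,
    fi.integrable_convolution L gi, ∫ t, ‖L‖ * ‖f t‖ * Cg, fun x => ?_⟩
  · rintro _ ⟨x, rfl⟩; exact hCg x
  · rw [convolution_def]
    refine norm_integral_le_of_norm_le ((fi.norm.const_mul _).mul_const _)
      (Filter.Eventually.of_forall fun t => ?_)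
    exact L.le_of_opNorm₂_le_of_le le_rfl le_rfl (hCg _)

lemma Good.mul {d : ℕ} {𝕜 : Type*} [RCLike 𝕜] {f g : Ed d → 𝕜} (hf : Good f) (hg : Good g) :
    Good (fun x => f x * g x) := by
  obtain ⟨fc, fi, Cf, hCf⟩ := hf
  obtain ⟨gc, gi, Cg, hCg⟩ := hg
  refine ⟨fc.mul gc, fi.mul_bdd (c := Cg) gc.aestronglyMeasurable (Filter.Eventually.of_forall hCg), Cf * Cg, fun x => ?_⟩
  rw [norm_mul]
  exact mul_le_mul (hCf x) (hCg x) (norm_nonneg _) ((norm_nonneg _).trans (hCf x))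

lemma Good.normsq {d : ℕ} {f : Ed d → ℂ} (hf : Good f) : Good (fun x => ‖f x‖ ^ 2) := by
  have : Good (fun x => ‖f x‖) := ⟨hf.1.norm, hf.2.1.norm, hf.2.2.imp fun C h x => by simpa using h x⟩
  simpa [sq] using this.mul this

lemma Good.integrand {d : ℕ} {f g : Ed d → ℝ} (hf : Good f) (hg : Good g) (x : Ed d) :
    Integrable (fun t => f t * g (x - t)) := by
  obtain ⟨fc, fi, Cf, hCf⟩ := hf
  obtain ⟨gc, gi, Cg, hCg⟩ := hg
  exact fi.mul_bdd (c := Cg) (gc.comp (by fun_prop)).aestronglyMeasurable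
    (Filter.Eventually.of_forall fun t => hCg _)

/-- Cauchy-Schwarz -/
lemma CS {α : Type*} [MeasurableSpace α] {μ : Measure α} {H : α → ℂ} {A B : α → ℝ}
    (hA : Integrable A μ) (hB : Integrable B μ) (hA0 : ∀ x, 0 ≤ A x) (hB0 : ∀ x, 0 ≤ B x)
    (h : ∀ x, ‖H x‖ ^ 2 ≤ A x * B x) :
    ‖∫ x, H x ∂μ‖ ^ 2 ≤ (∫ x, A x ∂μ) * ∫ x, B x ∂μ := by
  set N := ‖∫ x, H x ∂μ‖
  have key : ∀ t : ℝ, 0 ≤ (∫ x, A x ∂μ) * (t * t) + (-2 * N) * t + ∫ x, B x ∂μ := by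
    intro t
    have e : ∫ x, (t ^ 2 * A x + B x) ∂μ = t ^ 2 * (∫ x, A x ∂μ) + ∫ x, B x ∂μ := by
      rw [integral_add (hA.const_mul _) hB, integral_const_mul]
    have e0 : 0 ≤ ∫ x, (t ^ 2 * A x + B x) ∂μ :=
      integral_nonneg fun x => add_nonneg (mul_nonneg (sq_nonneg _) (hA0 x)) (hB0 x)
    rcases le_or_gt t 0 with ht | ht
    · have : 0 ≤ N * (-t) := mul_nonneg (norm_nonneg _) (by linarith)
      nlinarith
    · have h1 : N ≤ ∫ x, (2 * t)⁻¹ * (t ^ 2 * A x + B x) ∂μ := by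
        refine norm_integral_le_of_norm_le (((hA.const_mul _).add hB).const_mul _)
          (Filter.Eventually.of_forall fun x => ?_)
        rw [inv_mul_eq_div, le_div_iff₀ (by positivity)]
        have h3 : (‖H x‖ * (2 * t)) ^ 2 ≤ (t ^ 2 * A x + B x) ^ 2 := by
          nlinarith [h x, sq_nonneg (t ^ 2 * A x - B x), sq_nonneg t,
            mul_le_mul_of_nonneg_left (h x) (sq_nonneg t)]
        exact le_of_sq_le_sq h3 (add_nonneg (mul_nonneg (sq_nonneg _) (hA0 x)) (hB0 x))
      rw [integral_const_mul, inv_mul_eq_div, le_div_iff₀ (by positivity), e] at h1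
      nlinarith
  have := discrim_le_zero key
  rw [discrim] at this
  nlinarith

lemma CS_conv {d : ℕ} {F G : Ed d → ℂ} {s g P p : Ed d → ℝ} (hs : Good s) (hg : Good g)
    (hP : Good P) (hp : Good p) (s0 : ∀ x, 0 ≤ s x) (g0 : ∀ x, 0 ≤ g x)
    (P0 : ∀ x, 0 ≤ P x) (p0 : ∀ x, 0 ≤ p x)
    (h1 : ∀ x, ‖F x‖ ^ 2 ≤ s x * P x) (h2 : ∀ x, ‖G x‖ ^ 2 ≤ g x * p x) (u : Ed d) :
    ‖(F ⋆[ContinuousLinearMap.mul ℂ ℂ] G) u‖ ^ 2 ≤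
      (s ⋆[ContinuousLinearMap.lsmul ℝ ℝ] g) u * (P ⋆[ContinuousLinearMap.lsmul ℝ ℝ] p) u := by
  simp only [convolution_def, ContinuousLinearMap.lsmul_apply, smul_eq_mul,
    ContinuousLinearMap.mul_apply']
  refine CS (hs.integrand hg u) (hP.integrand hp u) (fun x => mul_nonneg (s0 _) (g0 _))
    (fun x => mul_nonneg (P0 _) (p0 _)) fun x => ?_
  rw [norm_mul, mul_pow]
  calc _ ≤ (s x * P x) * (g (u - x) * p (u - x)) :=
        mul_le_mul (h1 _) (h2 _) (sq_nonneg _) (mul_nonneg (s0 _) (P0 _))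
    _ = _ := by ring

lemma conv_nonneg {d : ℕ} {f g : Ed d → ℝ} (f0 : ∀ x, 0 ≤ f x) (g0 : ∀ x, 0 ≤ g x) (u : Ed d) :
    0 ≤ (f ⋆[ContinuousLinearMap.lsmul ℝ ℝ] g) u := by
  simp only [convolution_def, ContinuousLinearMap.lsmul_apply, smul_eq_mul]
  exact integral_nonneg fun x => mul_nonneg (f0 _) (g0 _)

lemma Jsq_good (d : ℕ) : Good (fun u => Jd d u ^ 2) := by
  obtain ⟨C, hC⟩ := Jd_bdd d
  refine ⟨(Jd_cont d).pow 2, Jd_sq_int d, C ^ 2, fun x => ?_⟩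
  rw [norm_pow, Real.norm_eq_abs]
  exact pow_le_pow_left₀ (abs_nonneg _) (hC x) 2

lemma convIter_good (d : ℕ) (k : ℕ) : Good (convIter d (fun u => Jd d u ^ 2) k) ∧
    ∀ u, 0 ≤ convIter d (fun u => Jd d u ^ 2) k u := by
  induction k with
  | zero => exact ⟨Jsq_good d, fun u => sq_nonneg _⟩
  | succ k ih => exact ⟨ih.1.conv (Jsq_good d) _, conv_nonneg ih.2 fun u => sq_nonneg _⟩

lemma Jmul_good {d : ℕ} {κ : Ed d → ℂ} (h : Good κ) : Good (fun u => (Jd d u : ℂ) * κ u) := by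
  obtain ⟨C, hC⟩ := Jd_bdd d
  obtain ⟨c, i, K, hK⟩ := h
  have jc : Continuous fun u => (Jd d u : ℂ) := Complex.continuous_ofReal.comp (Jd_cont d)
  have hb : ∀ u, ‖(Jd d u : ℂ)‖ ≤ C := fun u => by rw [Complex.norm_real]; exact hC u
  refine ⟨jc.mul c, i.bdd_mul (c := C) jc.aestronglyMeasurable (Filter.Eventually.of_forall hb), C * K, fun x => ?_⟩
  rw [norm_mul]
  exact mul_le_mul (hb x) (hK x) (norm_nonneg _) ((norm_nonneg _).trans (hb x))

lemma iter_exists {d : ℕ} {κ₁ κ₂ : Ed d → ℂ} (h1 : Good κ₁) (h2 : Good κ₂) (k : ℕ) :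
    ∃ F : Ed d → ℂ, ∃ P : Ed d → ℝ, Good F ∧ Good P ∧ (∀ u, 0 ≤ P u) ∧
      (∀ u, ‖F u‖ ^ 2 ≤ convIter d (fun u => Jd d u ^ 2) k u * P u) ∧
      ∀ x, FT F x = FT (fun u => (Jd d u : ℂ) * κ₁ u) x *
        FT (fun u => (Jd d u : ℂ) * κ₂ u) x ^ k := by
  induction k with
  | zero =>
    refine ⟨_, _, Jmul_good h1, h1.normsq, fun u => sq_nonneg _, fun u => ?_, fun x => by simp⟩
    simp [convIter, mul_pow]
  | succ k ih =>
    obtain ⟨F, P, hF, hP, hP0, hFP, hFT⟩ := ih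
    refine ⟨_, _, hF.conv (Jmul_good h2) (ContinuousLinearMap.mul ℂ ℂ),
      hP.conv h2.normsq (ContinuousLinearMap.lsmul ℝ ℝ), conv_nonneg hP0 fun u => sq_nonneg _,
      fun u => ?_, fun x => ?_⟩
    · refine CS_conv (convIter_good d k).1 (Jsq_good d) hP h2.normsq (convIter_good d k).2
        (fun u => sq_nonneg _) hP0 (fun u => sq_nonneg _) hFP (fun u => ?_) u
      simp [mul_pow]
    · rw [FT_conv hF.2.1 (Jmul_good h2).2.1, hFT, pow_succ, mul_assoc]

open FourierTransform SchwartzMap in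
lemma kappa_exists {d : ℕ} (a : Ed d) {δ : ℝ} (hδ : 0 < δ) :
    ∃ κ : Ed d → ℂ, ∃ b : Ed d → ℝ, Good κ ∧ Continuous b ∧ HasCompactSupport b ∧ (∀ x, 0 ≤ b x) ∧ 0 < b a ∧
      (∀ x, b x ≠ 0 → x ∈ Metric.ball a δ) ∧ ∀ u, FT κ u = b u := by
  let b : ContDiffBump a := ⟨δ / 2, δ, by positivity, by linarith⟩
  have hπ : (2 * Real.pi) ≠ 0 := by positivity
  have hs : HasCompactSupport (fun x => ((b ((2 * Real.pi) • x) : ℝ) : ℂ)) :=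
    (b.hasCompactSupport.comp_smul hπ).comp_left (g := Complex.ofReal) (by simp)
  have hc : ContDiff ℝ (⊤ : ℕ∞) (fun x => ((b ((2 * Real.pi) • x) : ℝ) : ℂ)) :=
    Complex.ofRealCLM.contDiff.comp (b.contDiff.comp (contDiff_const_smul _))
  let ψ : 𝓢(Ed d, ℂ) := hs.toSchwartzMap hc
  let κ : 𝓢(Ed d, ℂ) := 𝓕⁻ ψ
  refine ⟨κ, b, ⟨κ.continuous, κ.integrable, ?_⟩, b.continuous, b.hasCompactSupport, fun x => b.nonneg,
    b.pos_of_mem_ball (by simp [b, hδ]), fun x hx => ?_, fun u => ?_⟩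
  · obtain ⟨C, hC⟩ := κ.decay 0 0
    exact ⟨C, fun x => by simpa using hC.2 x⟩
  · have : x ∈ Function.support b := hx
    rwa [b.support_eq] at this
  · rw [FT_eq_fourier, ← SchwartzMap.fourier_coe]
    have : 𝓕 κ = ψ := FourierTransform.fourier_fourierInv_eq ψ
    rw [this]
    change ((b ((2 * Real.pi) • (2 * Real.pi)⁻¹ • u) : ℝ) : ℂ) = _
    rw [smul_smul, mul_inv_cancel₀ hπ, one_smul]

lemma FT_Jmul {d : ℕ} {κ : Ed d → ℂ} {b : Ed d → ℝ} (h : Good κ) (hb : ∀ u, FT κ u = b u)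
    (x : Ed d) : FT (fun u => (Jd d u : ℂ) * κ u) x =
      ((∫ y in Metric.closedBall (0 : Ed d) 1, b (x + y) : ℝ) : ℂ) := by
  set κ' : Ed d → ℂ := fun u => Complex.exp (-Complex.I * (⟪x, u⟫ : ℝ)) * κ u
  have hκ' : Integrable κ' := by
    refine h.2.1.bdd_mul (c := 1) (Continuous.aestronglyMeasurable (by fun_prop)) (Filter.Eventually.of_forall fun u => ?_)
    rw [Complex.norm_exp]; simp
  have e1 : FT (fun u => (Jd d u : ℂ) * κ u) x = ∫ u, FT (indB d) u * κ' u := by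
    rw [FT]; congr 1; ext u; rw [Jd_eq]; simp only [κ']; ring
  rw [e1, FT_swap (indB_int d) hκ', ← integral_indicator Metric.isClosed_closedBall.measurableSet,
    ← integral_complex_ofReal]
  congr 1; ext y
  have e2 : FT κ' y = b (x + y) := by
    rw [← hb, FT, FT]; congr 1; ext u
    simp only [κ']
    rw [← mul_assoc, ← Complex.exp_add, inner_add_left]
    congr 2; push_cast; ring
  rw [e2]
  by_cases hy : y ∈ Metric.closedBall (0 : Ed d) 1 <;> simp [indB, hy]

lemma piece {d : ℕ} (a : Ed d) {δ : ℝ} (hδ : 0 < δ) (ha : ‖a‖ < 1) :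
    ∃ κ : Ed d → ℂ, Good κ ∧ FT (fun u => (Jd d u : ℂ) * κ u) 0 ≠ 0 ∧
      ∀ x, FT (fun u => (Jd d u : ℂ) * κ u) x ≠ 0 → ‖x - a‖ < 1 + δ := by
  obtain ⟨κ, b, hκ, hbc, hbs, hb0, hba, hbsupp, hFT⟩ := kappa_exists a hδ
  refine ⟨κ, hκ, ?_, fun x hx => ?_⟩
  · rw [FT_Jmul hκ hFT]
    rw [Complex.ofReal_ne_zero]
    simp only [zero_add]
    refine ne_of_gt ?_
    rw [setIntegral_pos_iff_support_of_nonneg_ae (Filter.Eventually.of_forall hb0)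
      (hbc.integrable_of_hasCompactSupport hbs).integrableOn]
    have ho : IsOpen (Function.support b ∩ Metric.ball (0 : Ed d) 1) :=
      hbc.isOpen_support.inter Metric.isOpen_ball
    refine lt_of_lt_of_le (ho.measure_pos volume ⟨a, hba.ne', by simpa using ha⟩)
      (measure_mono (Set.inter_subset_inter_right _ Metric.ball_subset_closedBall))
  · rw [FT_Jmul hκ hFT, Complex.ofReal_ne_zero] at hx
    by_contra hcon
    push Not at hcon
    apply hx
    refine setIntegral_eq_zero_of_forall_eq_zero fun y hy => ?_
    by_contra hb
    have h1 := hbsupp _ hb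
    rw [mem_ball_iff_norm] at h1
    rw [mem_closedBall_zero_iff] at hy
    have : ‖x - a‖ ≤ ‖x + y - a‖ + ‖y‖ := by
      have e : x - a = (x + y - a) - y := by abel
      rw [e]; exact norm_sub_le _ _
    linarith

lemma core {d : ℕ} (hd : 1 ≤ d) (q : ℕ) (hq : 2 ≤ q) (ε : ℝ) (hε : 0 < ε) :
    ∃ F : Ed d → ℂ, ∃ P : Ed d → ℝ, Good F ∧ Good P ∧ (∀ u, 0 ≤ P u) ∧
      (∀ u, ‖F u‖ ^ 2 ≤ specDensityQ d q u * P u) ∧ FT F 0 ≠ 0 ∧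
      ∀ x, FT F x ≠ 0 → x ∈ Metric.ball (0 : Ed d) ε := by
  set δ : ℝ := min (1 / 2) (ε ^ 2 / 4)
  have hδ : 0 < δ := by positivity
  have hδ1 : δ ≤ 1 / 2 := min_le_left _ _
  have hδ2 : δ ≤ ε ^ 2 / 4 := min_le_right _ _
  set a : Ed d := EuclideanSpace.single ⟨0, hd⟩ (1 - δ)
  have ha : ‖a‖ = 1 - δ := by
    rw [show ‖a‖ = ‖(1 - δ : ℝ)‖ from PiLp.norm_single 2 (fun _ => ℝ) _ _, Real.norm_eq_abs]
    exact abs_of_nonneg (by linarith)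
  obtain ⟨κ₁, g1, n1, s1⟩ := piece a hδ (by linarith)
  obtain ⟨κ₂, g2, n2, s2⟩ := piece (-a) hδ (by rw [norm_neg]; linarith)
  obtain ⟨F, P, hF, hP, hP0, hFP, hFT⟩ := iter_exists g1 g2 (q - 1)
  refine ⟨F, P, hF, hP, hP0, hFP, ?_, fun x hx => ?_⟩
  · rw [hFT]; exact mul_ne_zero n1 (pow_ne_zero _ n2)
  · rw [hFT] at hx
    have h1 := s1 x (left_ne_zero_of_mul hx)
    have h2 := s2 x (ne_zero_pow (by omega) (right_ne_zero_of_mul hx))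
    rw [sub_neg_eq_add] at h2
    have par := parallelogram_law_with_norm ℝ x a
    rw [mem_ball_zero_iff]
    have h1' : ‖x - a‖ * ‖x - a‖ < (1 + δ) * (1 + δ) := by nlinarith [norm_nonneg (x - a)]
    have h2' : ‖x + a‖ * ‖x + a‖ < (1 + δ) * (1 + δ) := by nlinarith [norm_nonneg (x + a)]
    rw [ha] at par
    have : ‖x‖ ^ 2 < ε ^ 2 := by nlinarith
    exact lt_of_pow_lt_pow_left₀ 2 hε.le this

lemma IsCBS.integrable {d : ℕ} {A : Set (Ed d)} {h : Ed d → ℂ} (hh : IsCBS A h) : Integrable h := by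
  obtain ⟨hm, ⟨C, hC⟩, hb, -⟩ := hh
  obtain ⟨R, hR⟩ := hb.subset_closedBall 0
  have : IntegrableOn h (Metric.closedBall 0 R) :=
    Measure.integrableOn_of_bounded (M := C) (isCompact_closedBall _ _).measure_lt_top.ne
      hm.aestronglyMeasurable (Filter.Eventually.of_forall hC)
  rwa [integrableOn_iff_integrable_of_support_subset hR] at this

/-- Proposition 6: the field with covariance `Δ^q` (`q ≥ 2`), i.e. with spectral density
`s_q = (J_d²)^{∗q}`, exhibits no rigidity: for every `ε > 0` there is `φ` with
`0 < ∫ |φ|² s_q < ∞` orthogonal to all Fourier transforms of bounded compactly supported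
functions supported outside `B(0,ε)`; consequently `s_q·Leb` does not induce LMR on
`B(0,ε)`. -/
theorem power_covariance_not_rigid {d : ℕ} (hd : 1 ≤ d) (q : ℕ) (hq : 2 ≤ q)
    (ε : ℝ) (hε : 0 < ε) :
    (∃ φ : Ed d → ℂ, Measurable φ ∧
      0 < (∫⁻ u, (‖φ u‖₊ : ℝ≥0∞) ^ 2 * ENNReal.ofReal (specDensityQ d q u) ∂volume) ∧
      (∫⁻ u, (‖φ u‖₊ : ℝ≥0∞) ^ 2 * ENNReal.ofReal (specDensityQ d q u) ∂volume) < ⊤ ∧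
      ∀ h : Ed d → ℂ, IsCBS (Metric.ball (0 : Ed d) ε)ᶜ h →
        (∫ u, FT h u * φ u * ((specDensityQ d q u : ℝ) : ℂ) ∂volume) = 0)
    ∧ ¬ LMR (volume.withDensity fun u => ENNReal.ofReal (specDensityQ d q u))
        (Metric.ball (0 : Ed d) ε) := by
  obtain ⟨F, P, hF, hP, hP0, hFP, hF0, hFs⟩ := core hd q hq ε hε
  obtain ⟨sg, s0⟩ : Good (specDensityQ d q) ∧ ∀ u, 0 ≤ specDensityQ d q u := convIter_good d (q - 1)
  set s := specDensityQ d q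
  have hFz : ∀ u, s u = 0 → F u = 0 := fun u hu => by
    have := hFP u
    rw [hu, zero_mul] at this
    exact norm_eq_zero.1 (pow_eq_zero_iff (two_ne_zero) |>.1 (le_antisymm this (sq_nonneg _)))
  have horth : ∀ h : Ed d → ℂ, IsCBS (Metric.ball (0 : Ed d) ε)ᶜ h → ∫ u, FT h u * F u = 0 := by
    intro h hh
    rw [FT_swap hh.integrable hF.2.1]
    refine integral_eq_zero_of_ae (Filter.Eventually.of_forall fun x => ?_)
    by_cases hx : FT F x = 0
    · simp [hx]
    · have : h x = 0 := by
        by_contra hne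
        exact hh.2.2.2 hne (hFs x hx)
      simp [this]
  constructor
  · have hφ : ∀ u, (‖F u / (s u : ℂ)‖₊ : ℝ≥0∞) ^ 2 * ENNReal.ofReal (s u)
        = ENNReal.ofReal (‖F u‖ ^ 2 / s u) := by
      intro u
      rw [← ENNReal.coe_pow, ← ENNReal.ofReal_coe_nnreal, ← ENNReal.ofReal_mul (by positivity)]
      congr 1
      push_cast
      rw [norm_div, Complex.norm_real, div_pow, Real.norm_eq_abs, sq_abs]
      by_cases hs : s u = 0
      · simp [hs]
      · field_simp
    have hm : Measurable fun u => ENNReal.ofReal (‖F u‖ ^ 2 / s u) :=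
      ((hF.1.norm.pow 2).measurable.div sg.1.measurable).ennreal_ofReal
    refine ⟨fun u => F u / (s u : ℂ), ?_, ?_, ?_, ?_⟩
    · exact hF.1.measurable.div (Complex.continuous_ofReal.comp sg.1).measurable
    · simp only [hφ]
      rw [pos_iff_ne_zero]
      intro h0
      rw [lintegral_eq_zero_iff hm] at h0
      apply hF0
      rw [FT]
      refine integral_eq_zero_of_ae ?_
      filter_upwards [h0] with u hu
      simp only [Pi.zero_apply, ENNReal.ofReal_eq_zero] at hu
      have : F u = 0 := by
        by_cases hs : s u = 0
        · exact hFz u hs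
        · have hp : 0 < s u := lt_of_le_of_ne (s0 u) (Ne.symm hs)
          rw [div_le_iff₀ hp, zero_mul] at hu
          exact norm_eq_zero.1 (pow_eq_zero_iff (two_ne_zero) |>.1 (le_antisymm hu (sq_nonneg _)))
      simp [this]
    · simp only [hφ]
      refine lt_of_le_of_lt (lintegral_mono fun u => ENNReal.ofReal_le_ofReal ?_)
        hP.2.1.lintegral_lt_top
      exact div_le_of_le_mul₀ (s0 u) (hP0 u) (by rw [mul_comm]; exact hFP u)
    · intro h hh
      rw [← horth h hh]
      congr 1; ext u
      by_cases hs : s u = 0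
      · simp [hs, hFz u hs]
      · have : (s u : ℂ) ≠ 0 := by exact_mod_cast hs
        field_simp
  · intro hL
    have cF := FT_cont hF.2.1
    set f : Ed d → ℂ := fun x => (starRingEnd ℂ) (FT F x)
    have cf : Continuous f := Complex.continuous_conj.comp cF
    have hfs : Function.support f ⊆ Metric.ball 0 ε := fun x hx => hFs x (by
      simpa [f] using hx)
    have hf : IsCBS (Metric.ball (0 : Ed d) ε) f :=
      ⟨cf.measurable, ⟨_, fun x => by
        simpa only [f, RCLike.norm_conj] using FT_bdd F x⟩, Metric.isBounded_ball.subset hfs, hfs⟩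
    set c : ℝ := ‖∫ u, FT f u * F u‖
    have hc : 0 < c := by
      have e : ∫ u, FT f u * F u = ((∫ x, ‖FT F x‖ ^ 2 : ℝ) : ℂ) := by
        rw [FT_swap hf.integrable hF.2.1, ← integral_complex_ofReal]
        congr 1; ext x
        simp only [f]
        rw [mul_comm, Complex.mul_conj']
        push_cast; rfl
      have hcs : HasCompactSupport (fun x => ‖FT F x‖ ^ 2) := by
        refine HasCompactSupport.of_support_subset_isCompact (isCompact_closedBall (0 : Ed d) ε) fun x hx => ?_
        refine Metric.ball_subset_closedBall (hFs x fun h => hx (by simp [h]))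
      have : 0 < ∫ x, ‖FT F x‖ ^ 2 :=
        (cF.norm.pow 2).integral_pos_of_hasCompactSupport_nonneg_nonzero hcs
          (fun x => sq_nonneg _) (x := 0) (by simpa using hF0)
      simp only [c, e, Complex.norm_real]
      exact norm_pos_iff.2 this.ne'
    have hM : 0 ≤ ∫ u, P u := integral_nonneg hP0
    obtain ⟨h, hh, hlt⟩ := hL f hf (c ^ 2 / ((∫ u, P u) + 1)) (by positivity)
    have hi := hh.integrable
    rw [integral_withDensity_eq_integral_toReal_smul sg.1.measurable.ennreal_ofReal
      (Filter.Eventually.of_forall fun u => ENNReal.ofReal_lt_top)] at hlt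
    simp only [ENNReal.toReal_ofReal (s0 _), smul_eq_mul] at hlt
    have cd : Continuous fun u => FT f u - FT h u := (FT_cont hf.integrable).sub (FT_cont hi)
    have hbd : ∀ u, ‖FT f u - FT h u‖ ≤ (∫ x, ‖f x‖) + ∫ x, ‖h x‖ := fun u =>
      (norm_sub_le _ _).trans (add_le_add (FT_bdd _ _) (FT_bdd _ _))
    have hint : Integrable fun u => s u * ‖FT f u - FT h u‖ ^ 2 := by
      refine sg.2.1.mul_bdd (c := ((∫ x, ‖f x‖) + ∫ x, ‖h x‖) ^ 2) (cd.norm.pow 2).aestronglyMeasurable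
        (Filter.Eventually.of_forall fun u => ?_)
      rw [norm_pow, norm_norm]
      exact pow_le_pow_left₀ (norm_nonneg _) (hbd u) 2
    have intm : ∀ g : Ed d → ℂ, Integrable g → Integrable fun u => FT g u * F u := fun g hg =>
      hF.2.1.bdd_mul (c := ∫ x, ‖g x‖) (FT_cont hg).aestronglyMeasurable
        (Filter.Eventually.of_forall fun u => FT_bdd g u)
    have e : ∫ u, FT f u * F u = ∫ u, (FT f u - FT h u) * F u := by
      simp only [sub_mul]
      rw [integral_sub (intm f hf.integrable) (intm h hi), horth h hh, sub_zero]
    have hcs := CS (H := fun u => (FT f u - FT h u) * F u) hint hP.2.1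
      (fun u => mul_nonneg (s0 u) (sq_nonneg _)) hP0 (fun u => by
        rw [norm_mul, mul_pow]
        calc _ ≤ ‖FT f u - FT h u‖ ^ 2 * (s u * P u) :=
              mul_le_mul_of_nonneg_left (hFP u) (sq_nonneg _)
          _ = _ := by ring)
    rw [← e] at hcs
    change c ^ 2 ≤ _ at hcs
    rw [lt_div_iff₀ (by positivity)] at hlt
    have : 0 ≤ ∫ u, s u * ‖FT f u - FT h u‖ ^ 2 :=
      integral_nonneg fun u => mul_nonneg (s0 u) (sq_nonneg _)
    nlinarith
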